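/- Fix a sample S = (s_1,…,s_m). Let σ be an n×m random matrix whose entries σ_{j,i} are independent uniform Rademacher (±1) random variables. Then for all 0 < ε ≤ R̂(F,S), Pr_σ( R̂(F,S) ≥ R̂ⁿ_m(F,S,σ) + ε ) ≤ exp( − n m ε² / ( 4 ẑ(S) ( R̂(F,S) + ν̂_F(S) ) ) ). -/

import Mathlib

open MeasureTheory

noncomputable section

/-- Map a Boolean to a `±1` sign: `true ↦ 1`, `false ↦ -1`. -/
def sgnB (x : Bool) : ℝ := if x then 1 else -1

/-- The `n`-Monte-Carlo Empirical Rademacher Average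
`R̂ⁿ_m(F,S,σ) = (1/n) Σ_j sup_{f∈F} (1/m) Σ_i σ_{j,i} f(s_i)`. -/
def mcera {X ι : Type*} (f : ι → X → ℝ) (n m : ℕ) (S : Fin m → X)
    (σ : Fin n → Fin m → Bool) : ℝ :=
  (n : ℝ)⁻¹ * ∑ j : Fin n, ⨆ l : ι, (m : ℝ)⁻¹ * ∑ k : Fin m, sgnB (σ j k) * f l (S k)

/-- Uniform measure on `n × m` sign matrices: the entries are independent
uniform Rademacher (±1) random variables. -/
def radMeasure (n m : ℕ) : Measure (Fin n → Fin m → Bool) :=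
  (PMF.uniformOfFintype (Fin n → Fin m → Bool)).toMeasure

/-- The Empirical Rademacher Average `R̂(F,S) = E_σ[R̂ⁿ_m(F,S,σ)]`. -/
def era {X ι : Type*} (f : ι → X → ℝ) (n m : ℕ) (S : Fin m → X) : ℝ :=
  ∫ σ, mcera f n m S σ ∂(radMeasure n m)

/-- The Rademacher Complexity `R(F,m) = E_S[R̂(F,S)]`, `S` being `m` i.i.d. samples. -/
def rc {X ι : Type*} [MeasurableSpace X] (f : ι → X → ℝ) (n m : ℕ) (μ : Measure X) : ℝ :=
  ∫ S : Fin m → X, era f n m S ∂(Measure.pi fun _ : Fin m => μ)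

/-- `ẑ(S) = sup_{f∈F, 1≤i≤m} |f(s_i)|`. -/
def zhat {X ι : Type*} (f : ι → X → ℝ) {m : ℕ} (S : Fin m → X) : ℝ :=
  ⨆ p : ι × Fin m, |f p.1 (S p.2)|

/-- `ν̂_F(S) = (1/m) sup_{f∈F} Σ_i |f(s_i)|`. -/
def nuhat {X ι : Type*} (f : ι → X → ℝ) {m : ℕ} (S : Fin m → X) : ℝ :=
  (m : ℝ)⁻¹ * ⨆ l : ι, ∑ k : Fin m, |f l (S k)|

/-- The empirical wimpy variance `σ̂²_F(S) = (1/m) sup_{f∈F} Σ_i f(s_i)²`. -/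
def sigma2hat {X ι : Type*} (f : ι → X → ℝ) {m : ℕ} (S : Fin m → X) : ℝ :=
  (m : ℝ)⁻¹ * ⨆ l : ι, ∑ k : Fin m, (f l (S k)) ^ 2

/-- The wimpy variance `σ²_F = sup_{f∈F} E_μ[f²]`. -/
def wimpyVar {X ι : Type*} [MeasurableSpace X] (f : ι → X → ℝ) (μ : Measure X) : ℝ :=
  ⨆ l : ι, ∫ x, (f l x) ^ 2 ∂μ

/-- The positive supremum deviation `SD⁺(F,S) = sup_{f∈F} ((1/m)Σ_i f(s_i) - E_μ[f])`. -/
def sdPlus {X ι : Type*} [MeasurableSpace X] (f : ι → X → ℝ) (μ : Measure X)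
    {m : ℕ} (S : Fin m → X) : ℝ :=
  ⨆ l : ι, ((m : ℝ)⁻¹ * ∑ k : Fin m, f l (S k) - ∫ x, f l x ∂μ)

/-- The negative supremum deviation `SD⁻(F,S) = sup_{f∈F} (E_μ[f] - (1/m)Σ_i f(s_i))`. -/
def sdMinus {X ι : Type*} [MeasurableSpace X] (f : ι → X → ℝ) (μ : Measure X)
    {m : ℕ} (S : Fin m → X) : ℝ :=
  ⨆ l : ι, ((∫ x, f l x ∂μ) - (m : ℝ)⁻¹ * ∑ k : Fin m, f l (S k))

/-- `η_F = sup_{f∈F} E_μ[f] - a`. -/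
def etaF {X ι : Type*} [MeasurableSpace X] (f : ι → X → ℝ) (μ : Measure X) (a : ℝ) : ℝ :=
  (⨆ l : ι, ∫ x, f l x ∂μ) - a

/-- `γ_F = b - inf_{f∈F} E_μ[f]`. -/
def gammaF {X ι : Type*} [MeasurableSpace X] (f : ι → X → ℝ) (μ : Measure X) (b : ℝ) : ℝ :=
  b - ⨅ l : ι, ∫ x, f l x ∂μ

/-- `η̂_F(S) = sup_{f∈F} (1/m) Σ_i f(s_i) - a`. -/
def etahat {X ι : Type*} (f : ι → X → ℝ) {m : ℕ} (S : Fin m → X) (a : ℝ) : ℝ :=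
  (⨆ l : ι, (m : ℝ)⁻¹ * ∑ k : Fin m, f l (S k)) - a

/-- `γ̂_F(S) = b - sup_{f∈F} (1/m) Σ_i f(s_i)`. -/
def gammahat {X ι : Type*} (f : ι → X → ℝ) {m : ℕ} (S : Fin m → X) (b : ℝ) : ℝ :=
  b - ⨆ l : ι, (m : ℝ)⁻¹ * ∑ k : Fin m, f l (S k)

/-- `h(x) = (1+x) ln(1+x) - x`. -/
def hfun (x : ℝ) : ℝ := (1 + x) * Real.log (1 + x) - x

/-- `g(σ) = n m R̂ⁿ_m(F,S,σ) = Σ_j sup_{f∈F} Σ_i σ_{j,i} f(s_i)`. -/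
def gup {X ι : Type*} (f : ι → X → ℝ) {n m : ℕ} (S : Fin m → X)
    (σ : Fin n → Fin m → Bool) : ℝ :=
  ∑ j : Fin n, ⨆ l : ι, ∑ k : Fin m, sgnB (σ j k) * f l (S k)

/-- `g_{j,i}(σ)`: infimum over `σ'_{j,i} ∈ {-1,1}` of `g` evaluated at `σ` with its
`(j,i)` entry replaced by `σ'_{j,i}`. -/
def gji {X ι : Type*} (f : ι → X → ℝ) {n m : ℕ} (S : Fin m → X)
    (σ : Fin n → Fin m → Bool) (j : Fin n) (i : Fin m) : ℝ :=
  min (gup f S (Function.update σ j (Function.update (σ j) i true)))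
      (gup f S (Function.update σ j (Function.update (σ j) i false)))

/-- `g(S) = m SD⁺(F,S) = sup_{f∈F} (Σ_i f(s_i) - m E_μ[f])`. -/
def gSDp {X ι : Type*} [MeasurableSpace X] (f : ι → X → ℝ) (μ : Measure X)
    {m : ℕ} (S : Fin m → X) : ℝ :=
  ⨆ l : ι, (∑ k : Fin m, f l (S k) - m * ∫ x, f l x ∂μ)

/-- `g_i(S) = inf_{s'_i ∈ X} g(s_1,…,s_{i-1},s'_i,s_{i+1},…,s_m)` for `g = m SD⁺`. -/
def gSDpi {X ι : Type*} [MeasurableSpace X] (f : ι → X → ℝ) (μ : Measure X)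
    {m : ℕ} (S : Fin m → X) (i : Fin m) : ℝ :=
  ⨅ s' : X, gSDp f μ (Function.update S i s')

/-- `g(S) = m SD⁻(F,S) = sup_{f∈F} (m E_μ[f] - Σ_i f(s_i))`. -/
def gSDm {X ι : Type*} [MeasurableSpace X] (f : ι → X → ℝ) (μ : Measure X)
    {m : ℕ} (S : Fin m → X) : ℝ :=
  ⨆ l : ι, ((m : ℝ) * (∫ x, f l x ∂μ) - ∑ k : Fin m, f l (S k))

/-- `g_i(S) = inf_{s'_i ∈ X} g(s_1,…,s_{i-1},s'_i,s_{i+1},…,s_m)` for `g = m SD⁻`. -/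
def gSDmi {X ι : Type*} [MeasurableSpace X] (f : ι → X → ℝ) (μ : Measure X)
    {m : ℕ} (S : Fin m → X) (i : Fin m) : ℝ :=
  ⨅ s' : X, gSDm f μ (Function.update S i s')

/-- `g(S) = m σ̂²_F(S) = sup_{f∈F} Σ_i f(s_i)²`. -/
def gWv {X ι : Type*} (f : ι → X → ℝ) {m : ℕ} (S : Fin m → X) : ℝ :=
  ⨆ l : ι, ∑ k : Fin m, (f l (S k)) ^ 2

/-- `g_j(S) = sup_{f∈F} Σ_{i≠j} f(s_i)²`. -/
def gWvj {X ι : Type*} (f : ι → X → ℝ) {m : ℕ} (S : Fin m → X) (j : Fin m) : ℝ :=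
  ⨆ l : ι, ∑ k ∈ Finset.univ.erase j, (f l (S k)) ^ 2

/-!
Expanding each supremum of `mcera` row by row, `n * m * mcera` becomes a single Rademacher supremum
`Z` over `n * m` signs, whose class consists of all choices of one function per row. Adding
`N = n * m * nuhat` and dividing by `2 * zhat` makes `Z` self-bounding: replacing the contribution
of one sign by its worst case lowers `Z` by at most `2 * zhat`, and in total by at most `Z + N`.

Self-bounding functions `W` satisfy the Poisson-type bound `log E[exp (l W)] ≤ (exp l - 1) E[W]` for
`l ≤ 0`, which gives the lower tail by Chernoff's method. The bound comes from the entropy method: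
entropy is subadditive over independent coordinates (telescope over the coordinates integrated out
and apply the variational formula in each), one coordinate contributes at most
`(exp (-l) + l - 1) E[exp (l W) (W - V i)]`, and the resulting differential inequality for the
cumulant generating function is integrated from `0` (Herbst's argument).
-/

open Filter ProbabilityTheory Real Set Topology

section Calculus

lemma sub_le_mul_log_sub_mul_log {a u : ℝ} (ha : 0 < a) (hu : 0 < u) :
    a - u ≤ a * log a - a * log u := by
  have h := mul_le_mul_of_nonneg_left (log_le_sub_one_of_pos (div_pos hu ha)) ha.le
  rw [log_div hu.ne' ha.ne', mul_sub_one, mul_div_cancel₀ u ha.ne'] at h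
  linarith

lemma exp_le_one_add_add_sq_div_two {x : ℝ} (hx : x ≤ 0) : exp x ≤ 1 + x + x ^ 2 / 2 := by
  have hpos : 0 < 1 + x + x ^ 2 / 2 := by nlinarith [sq_nonneg (x + 1)]
  have hexp : 1 - x + x ^ 2 / 2 ≤ exp (-x) := by
    simpa [← sub_eq_add_neg] using quadratic_le_exp_of_nonneg (neg_nonneg.2 hx)
  rw [← neg_neg x, exp_neg, neg_neg, inv_le_iff_one_le_mul₀ (exp_pos _)]
  calc 1 ≤ (1 + x + x ^ 2 / 2) * (1 - x + x ^ 2 / 2) := by nlinarith [sq_nonneg (x ^ 2)]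
    _ ≤ (1 + x + x ^ 2 / 2) * exp (-x) := mul_le_mul_of_nonneg_left hexp hpos.le

lemma tendsto_div_nhdsNE_of_hasDerivAt {𝕜 : Type*} [NontriviallyNormedField 𝕜] {f g : 𝕜 → 𝕜}
    {x f' g' : 𝕜} (hf : HasDerivAt f f' x) (hg : HasDerivAt g g' x) (hfx : f x = 0)
    (hgx : g x = 0) (hg' : g' ≠ 0) :
    Tendsto (fun y => f y / g y) (𝓝[≠] x) (𝓝 (f' / g')) := by
  refine (hf.tendsto_slope.div hg.tendsto_slope hg').congr' ?_
  filter_upwards [self_mem_nhdsWithin] with y hy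
  simp only [Pi.div_apply, slope_def_field, hfx, hgx, sub_zero]
  exact div_div_div_cancel_right₀ (sub_ne_zero.2 hy) _ _

-- `ψ l / (exp l - 1)` is antitone by `hle` and tends to `ψ' 0` at `0`.
lemma le_mul_exp_sub_one {ψ ψ' : ℝ → ℝ} (hderiv : ∀ l ≤ 0, HasDerivAt ψ (ψ' l) l) (hzero : ψ 0 = 0)
    (hle : ∀ l < 0, (1 - exp (-l)) * ψ' l ≤ ψ l) {l : ℝ} (hl : l < 0) :
    ψ l ≤ ψ' 0 * (exp l - 1) := by
  have hexp (t : ℝ) : HasDerivAt (fun t => exp t - 1) (exp t) t := (hasDerivAt_exp t).sub_const 1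
  have hneg {t : ℝ} (ht : t < 0) : exp t - 1 < 0 := sub_neg.2 (exp_lt_one_iff.2 ht)
  have hquot (t : ℝ) (ht : t < 0) := (hderiv t ht.le).fun_div (hexp t) (hneg ht).ne
  have hanti : AntitoneOn (fun t => ψ t / (exp t - 1)) (Iio 0) := by
    refine antitoneOn_of_deriv_nonpos (convex_Iio 0)
      (fun t ht => (hquot t ht).continuousAt.continuousWithinAt)
      (fun t ht => (hquot t (by simpa using ht)).differentiableAt.differentiableWithinAt)
      fun t ht => ?_
    rw [interior_Iio] at ht
    rw [(hquot t ht).deriv]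
    refine div_nonpos_of_nonpos_of_nonneg (sub_nonpos.2 ?_) (sq_nonneg _)
    calc ψ' t * (exp t - 1) = (1 - exp (-t)) * ψ' t * exp t := by rw [exp_neg]; field_simp
      _ ≤ ψ t * exp t := mul_le_mul_of_nonneg_right (hle t ht) (exp_pos t).le
  have hlim : Tendsto (fun t => ψ t / (exp t - 1)) (𝓝[<] 0) (𝓝 (ψ' 0)) := by
    have h := tendsto_div_nhdsNE_of_hasDerivAt (hderiv 0 le_rfl) (hexp 0) hzero (by simp) (by simp)
    rw [exp_zero, div_one] at h
    exact h.mono_left (nhdsWithin_mono _ fun t ht => ne_of_lt ht)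
  refine (le_div_iff_of_neg (hneg hl)).1 (le_of_tendsto hlim ?_)
  filter_upwards [Ioo_mem_nhdsLT hl] with t ht
  exact hanti hl ht.2 ht.1.le

end Calculus

section Entropy

variable {Ω : Type*} [MeasurableSpace Ω] {μ : Measure Ω} {f g W : Ω → ℝ} {a b u l : ℝ}

/-- The entropy `Ent f = E[f log f] - E[f] log E[f]` of a positive function. -/
def entropy (μ : Measure Ω) (f : Ω → ℝ) : ℝ :=
  ∫ x, f x * log (f x) ∂μ - (∫ x, f x ∂μ) * log (∫ x, f x ∂μ)

lemma integrable_mul_log [IsFiniteMeasure μ] (ha : 0 < a) (hf : Measurable f)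
    (hfab : ∀ x, f x ∈ Icc a b) (hg : Measurable g) (hgab : ∀ x, g x ∈ Icc a b) :
    Integrable (fun x => f x * log (g x)) μ := by
  refine (Integrable.of_mem_Icc (log a) (log b) hg.log.aemeasurable (.of_forall fun x =>
    ⟨log_le_log ha (hgab x).1, log_le_log (ha.trans_le (hgab x).1) (hgab x).2⟩)).bdd_mul
      (c := b) hf.aestronglyMeasurable (.of_forall fun x => ?_)
  rw [norm_of_nonneg (ha.le.trans (hfab x).1)]
  exact (hfab x).2

lemma integral_mem_Icc [IsProbabilityMeasure μ] (hf : Measurable f) (hfab : ∀ x, f x ∈ Icc a b) :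
    ∫ x, f x ∂μ ∈ Icc a b :=
  (convex_Icc a b).integral_mem isClosed_Icc (.of_forall hfab)
    (.of_mem_Icc a b hf.aemeasurable (.of_forall hfab))

lemma integral_mul_log_sub_le_entropy [IsProbabilityMeasure μ] (ha : 0 < a) (hf : Measurable f)
    (hfab : ∀ x, f x ∈ Icc a b) (hg : Measurable g) (hgab : ∀ x, g x ∈ Icc a b) :
    ∫ x, f x * log (g x) ∂μ - (∫ x, f x ∂μ) * log (∫ x, g x ∂μ) ≤ entropy μ f := by
  have hfi : Integrable f μ := .of_mem_Icc a b hf.aemeasurable (.of_forall hfab)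
  have hgi : Integrable g μ := .of_mem_Icc a b hg.aemeasurable (.of_forall hgab)
  have hff := integrable_mul_log (μ := μ) ha hf hfab hf hfab
  have hfg := integrable_mul_log (μ := μ) ha hf hfab hg hgab
  have hF : 0 < ∫ x, f x ∂μ := ha.trans_le (integral_mem_Icc hf hfab).1
  have hG : 0 < ∫ x, g x ∂μ := ha.trans_le (integral_mem_Icc hg hgab).1
  set r := (∫ x, f x ∂μ) / ∫ x, g x ∂μ with hr
  have hr0 : 0 < r := div_pos hF hG
  have hpoint (x : Ω) : f x - g x * r ≤ f x * log (f x) - f x * log (g x) - f x * log r := by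
    have hgx := ha.trans_le (hgab x).1
    have h := sub_le_mul_log_sub_mul_log (ha.trans_le (hfab x).1) (mul_pos hgx hr0)
    rw [log_mul hgx.ne' hr0.ne'] at h
    linarith
  have hint := integral_mono (hfi.sub (hgi.mul_const r))
    ((hff.sub hfg).sub (hfi.mul_const (log r))) hpoint
  rw [integral_sub' hfi (hgi.mul_const r), integral_sub' (hff.sub hfg) (hfi.mul_const _),
    integral_sub' hff hfg, integral_mul_const, integral_mul_const, hr, mul_div_cancel₀ _ hG.ne',
    log_div hF.ne' hG.ne'] at hint
  rw [entropy]
  linarith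

lemma entropy_le_integral [IsProbabilityMeasure μ] (hf : 0 < ∫ x, f x ∂μ) (hfi : Integrable f μ)
    (hflog : Integrable (fun x => f x * log (f x)) μ) (hu : 0 < u) :
    entropy μ f ≤ ∫ x, (f x * log (f x) - f x * log u - f x + u) ∂μ := by
  rw [integral_add (by fun_prop) (by fun_prop), integral_sub (by fun_prop) hfi,
    integral_sub hflog (by fun_prop), integral_mul_const, integral_const, probReal_univ, one_smul,
    entropy]
  linarith [sub_le_mul_log_sub_mul_log hf hu]

lemma exp_mul_mul_sub_le {w : ℝ} (hu : u ≤ w) (hw : w ≤ u + 1) :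
    exp (l * w) * (l * w) - exp (l * w) * (l * u) - exp (l * w) + exp (l * u) ≤
      (exp (-l) + l - 1) * (exp (l * w) * (w - u)) := by
  have hconv := convexOn_exp.2 (mem_univ 0) (mem_univ (-l))
    (show 0 ≤ 1 - (w - u) by linarith) (sub_nonneg.2 hu) (by ring)
  simp only [smul_eq_mul, mul_zero, zero_add, exp_zero, mul_one] at hconv
  have hsplit : exp (l * u) = exp (l * w) * exp ((w - u) * -l) := by rw [← exp_add]; ring_nf
  rw [hsplit]
  linear_combination exp (l * w) * hconv

lemma entropy_exp_le [IsProbabilityMeasure μ] (hW : Measurable W)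
    (hWu : ∀ x, W x ∈ Icc u (u + 1)) :
    entropy μ (fun x => exp (l * W x)) ≤
      (exp (-l) + l - 1) * ∫ x, exp (l * W x) * (W x - u) ∂μ := by
  have hexp : Integrable (fun x => exp (l * W x)) μ :=
    integrable_exp_mul_of_mem_Icc hW.aemeasurable (.of_forall hWu)
  have hexpW : Integrable (fun x => exp (l * W x) * (W x - u)) μ :=
    hexp.mul_bdd (c := 1) (by fun_prop) (.of_forall fun x =>
      abs_le.2 ⟨by linarith [(hWu x).1], by linarith [(hWu x).2]⟩)
  have hlog : Integrable (fun x => exp (l * W x) * log (exp (l * W x))) μ := by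
    refine ((hexpW.const_mul l).add (hexp.const_mul (l * u))).congr (.of_forall fun x => ?_)
    simp only [Pi.add_apply, log_exp]
    ring
  refine (entropy_le_integral (integral_exp_pos hexp) hexp hlog (exp_pos (l * u))).trans ?_
  rw [← integral_const_mul]
  refine integral_mono (by fun_prop) (by fun_prop) fun x => ?_
  simpa only [log_exp] using exp_mul_mul_sub_le (hWu x).1 (hWu x).2

end Entropy

section Tensorization

variable {ι : Type*} [DecidableEq ι] {Ω : ι → Type*} [∀ i, MeasurableSpace (Ω i)]

lemma measurable_piecewise_pair (s : Finset ι) :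
    Measurable fun p : (∀ i, Ω i) × (∀ i, Ω i) => s.piecewise p.2 p.1 := by
  refine measurable_pi_iff.2 fun i => ?_
  by_cases hi : i ∈ s <;> simp only [hi, Finset.piecewise_eq_of_mem,
    Finset.piecewise_eq_of_notMem, not_false_eq_true] <;> fun_prop

variable [Fintype ι] {μ : ∀ i, Measure (Ω i)} {f : (∀ i, Ω i) → ℝ} {a b : ℝ}

/-- The conditional expectation of `f` given the coordinates outside `s`: those in `s` are
integrated out. -/
def partialIntegral (μ : ∀ i, Measure (Ω i)) (f : (∀ i, Ω i) → ℝ) (s : Finset ι)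
    (x : ∀ i, Ω i) : ℝ :=
  ∫ y, f (s.piecewise y x) ∂Measure.pi μ

lemma partialIntegral_univ (x : ∀ i, Ω i) :
    partialIntegral μ f Finset.univ x = ∫ y, f y ∂Measure.pi μ := by
  simp [partialIntegral]

variable [∀ i, IsProbabilityMeasure (μ i)]

variable (μ) in
lemma measurePreserving_update (i : ι) :
    MeasurePreserving (fun p : (∀ j, Ω j) × Ω i => Function.update p.1 i p.2)
      ((Measure.pi μ).prod (μ i)) (Measure.pi μ) := by
  refine ⟨measurable_update', (Measure.pi_eq fun s hs => ?_).symm⟩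
  have hpre : (fun p : (∀ j, Ω j) × Ω i => Function.update p.1 i p.2) ⁻¹' univ.pi s =
      univ.pi (Function.update s i univ) ×ˢ s i := by
    ext p
    simp only [mem_preimage, mem_univ_pi, mem_prod]
    rw [Function.forall_update_iff p.1 (fun j x => x ∈ s j),
      Function.forall_update_iff s (fun j t => p.1 j ∈ t)]
    simp [and_comm]
  have hprod : ∏ j ∈ Finset.univ.erase i, μ j (Function.update s i univ j) =
      ∏ j ∈ Finset.univ.erase i, μ j (s j) :=
    Finset.prod_congr rfl fun j hj => by rw [Function.update_of_ne (Finset.ne_of_mem_erase hj)]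
  rw [Measure.map_apply measurable_update' (.univ_pi hs), hpre, Measure.prod_prod,
    Measure.pi_pi, ← Finset.mul_prod_erase _ _ (Finset.mem_univ i), hprod,
    ← Finset.mul_prod_erase _ (fun j => μ j (s j)) (Finset.mem_univ i), Function.update_self,
    measure_univ, one_mul, mul_comm]

lemma integrable_update (hf : Integrable f (Measure.pi μ)) (i : ι) :
    Integrable (fun p : (∀ j, Ω j) × Ω i => f (Function.update p.1 i p.2))
      ((Measure.pi μ).prod (μ i)) :=
  (measurePreserving_update μ i).integrable_comp_of_integrable hf

lemma integral_integral_update (hf : Integrable f (Measure.pi μ)) (i : ι) :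
    ∫ x, ∫ t, f (Function.update x i t) ∂μ i ∂Measure.pi μ = ∫ x, f x ∂Measure.pi μ := by
  have hmap := (measurePreserving_update μ i).map_eq
  rw [← integral_prod (fun p : (∀ j, Ω j) × Ω i => f (Function.update p.1 i p.2))
    (integrable_update hf i)]
  conv_rhs => rw [← hmap]
  exact (integral_map measurable_update'.aemeasurable
    (by rw [hmap]; exact hf.aestronglyMeasurable)).symm

lemma measurable_partialIntegral (hf : Measurable f) (s : Finset ι) :
    Measurable (partialIntegral μ f s) :=
  (hf.comp (measurable_piecewise_pair s)).stronglyMeasurable.integral_prod_right'.measurable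

lemma partialIntegral_mem_Icc (hf : Measurable f) (hfab : ∀ x, f x ∈ Icc a b) (s : Finset ι)
    (x : ∀ i, Ω i) : partialIntegral μ f s x ∈ Icc a b :=
  integral_mem_Icc (hf.comp ((measurable_piecewise_pair s).comp measurable_prodMk_left))
    fun _ => hfab _

lemma partialIntegral_empty : partialIntegral μ f ∅ = f := by
  ext x
  simp [partialIntegral]

lemma partialIntegral_insert (hf : Measurable f) (hfab : ∀ x, f x ∈ Icc a b) {s : Finset ι}
    {i : ι} (hi : i ∉ s) (x : ∀ i, Ω i) :
    partialIntegral μ f (insert i s) x =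
      ∫ t, partialIntegral μ f s (Function.update x i t) ∂μ i := by
  have hpair : Measurable fun p : Ω i × (∀ j, Ω j) =>
      f (s.piecewise p.2 (Function.update x i p.1)) :=
    hf.comp ((measurable_piecewise_pair s).comp
      (((measurable_update x).comp measurable_fst).prodMk measurable_snd))
  have hins : Measurable fun y => f ((insert i s).piecewise y x) :=
    hf.comp ((measurable_piecewise_pair _).comp measurable_prodMk_left)
  have hglue (y : ∀ j, Ω j) (t : Ω i) : (insert i s).piecewise (Function.update y i t) x =
      s.piecewise y (Function.update x i t) := by
    ext j
    rcases eq_or_ne j i with rfl | hj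
    · simp [hi]
    · by_cases hjs : j ∈ s <;> simp [hj, hjs]
  simp only [partialIntegral]
  rw [integral_integral_swap (f := fun t y => f (s.piecewise y (Function.update x i t)))
      (.of_mem_Icc a b hpair.aemeasurable (.of_forall fun _ => hfab _)),
    ← integral_integral_update (.of_mem_Icc a b hins.aemeasurable (.of_forall fun _ => hfab _)) i]
  simp only [hglue]

lemma integrable_entropy_update (ha : 0 < a) (hf : Measurable f) (hfab : ∀ x, f x ∈ Icc a b)
    (i : ι) :
    Integrable (fun x => entropy (μ i) fun t => f (Function.update x i t)) (Measure.pi μ) := by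
  have hmeas : Measurable fun x => ∫ t, f (Function.update x i t) ∂μ i :=
    (hf.comp measurable_update').stronglyMeasurable.integral_prod_right'.measurable
  have hIcc (x : ∀ i, Ω i) : ∫ t, f (Function.update x i t) ∂μ i ∈ Icc a b :=
    integral_mem_Icc (hf.comp (measurable_update x)) fun _ => hfab _
  exact (integrable_update (integrable_mul_log ha hf hfab hf hfab) i).integral_prod_left.sub
    (integrable_mul_log ha hmeas hIcc hmeas hIcc)

lemma integral_mul_log_sub_partialIntegral_insert_le (ha : 0 < a) (hf : Measurable f)
    (hfab : ∀ x, f x ∈ Icc a b) {s : Finset ι} {i : ι} (hi : i ∉ s) :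
    ∫ x, f x * log (partialIntegral μ f s x) ∂Measure.pi μ -
      ∫ x, f x * log (partialIntegral μ f (insert i s) x) ∂Measure.pi μ ≤
      ∫ x, entropy (μ i) (fun t => f (Function.update x i t)) ∂Measure.pi μ := by
  have hint (s : Finset ι) :
      Integrable (fun x => f x * log (partialIntegral μ f s x)) (Measure.pi μ) :=
    integrable_mul_log ha hf hfab (measurable_partialIntegral hf s)
      (partialIntegral_mem_Icc hf hfab s)
  have hinner (s : Finset ι) := (integrable_update (hint s) i).integral_prod_left
  rw [← integral_integral_update (hint s) i, ← integral_integral_update (hint (insert i s)) i,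
    ← integral_sub (hinner s) (hinner (insert i s))]
  refine integral_mono ((hinner s).sub (hinner (insert i s)))
    (integrable_entropy_update ha hf hfab i) fun x => ?_
  simp only [partialIntegral_insert hf hfab hi, Function.update_idem, integral_mul_const]
  exact integral_mul_log_sub_le_entropy ha (hf.comp (measurable_update x)) (fun _ => hfab _)
    ((measurable_partialIntegral hf s).comp (measurable_update x))
    fun _ => partialIntegral_mem_Icc hf hfab s _

theorem entropy_pi_le_sum (ha : 0 < a) (hf : Measurable f) (hfab : ∀ x, f x ∈ Icc a b) :
    entropy (Measure.pi μ) f ≤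
      ∑ i, ∫ x, entropy (μ i) (fun t => f (Function.update x i t)) ∂Measure.pi μ := by
  have hsub (s : Finset ι) : ∫ x, f x * log (f x) ∂Measure.pi μ -
      ∫ x, f x * log (partialIntegral μ f s x) ∂Measure.pi μ ≤
      ∑ i ∈ s, ∫ x, entropy (μ i) (fun t => f (Function.update x i t)) ∂Measure.pi μ := by
    induction s using Finset.induction_on with
    | empty => simp [partialIntegral_empty]
    | insert i s hi ih =>
      rw [Finset.sum_insert hi]
      linarith [integral_mul_log_sub_partialIntegral_insert_le (μ := μ) ha hf hfab hi]
  have huniv := hsub Finset.univ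
  simp only [partialIntegral_univ, integral_mul_const] at huniv
  exact huniv

end Tensorization

section SelfBounding

variable {ι : Type*} [Fintype ι] [DecidableEq ι] {Ω : ι → Type*} [∀ i, MeasurableSpace (Ω i)]

/-- A self-bounding function `W` of independent variables, with its witnesses `V i`: functions not
depending on coordinate `i` such that `0 ≤ W - V i ≤ 1` and `∑ i, (W - V i) ≤ W`. -/
structure IsSelfBounding (W : (∀ i, Ω i) → ℝ) (V : ι → (∀ i, Ω i) → ℝ) : Prop where
  measurable : Measurable W
  measurable_minorant : ∀ i, Measurable (V i)
  minorant_update : ∀ i x (t : Ω i), V i (Function.update x i t) = V i x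
  minorant_le : ∀ i x, V i x ≤ W x
  le_minorant_add_one : ∀ i x, W x ≤ V i x + 1
  sum_sub_le : ∀ x, ∑ i, (W x - V i x) ≤ W x

namespace IsSelfBounding

variable {W : (∀ i, Ω i) → ℝ} {V : ι → (∀ i, Ω i) → ℝ} (h : IsSelfBounding W V)

include h

lemma nonneg (x : ∀ i, Ω i) : 0 ≤ W x :=
  (Finset.sum_nonneg fun i _ => sub_nonneg.2 (h.minorant_le i x)).trans (h.sum_sub_le x)

lemma update_le_add_one (x : ∀ i, Ω i) (i : ι) (t : Ω i) :
    W (Function.update x i t) ≤ W x + 1 := by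
  have hup := h.le_minorant_add_one i (Function.update x i t)
  rw [h.minorant_update] at hup
  linarith [h.minorant_le i x]

lemma le_add_card (x y : ∀ i, Ω i) : W x ≤ W y + Fintype.card ι := by
  have hpiecewise (s : Finset ι) : W (s.piecewise x y) ≤ W y + s.card := by
    induction s using Finset.induction_on with
    | empty => simp
    | insert i s hi ih =>
      rw [Finset.piecewise_insert, Finset.card_insert_of_notMem hi]
      push_cast
      linarith [h.update_le_add_one (s.piecewise x y) i (x i)]
  simpa using hpiecewise Finset.univ

lemma exists_forall_mem_Icc : ∃ b, ∀ x, W x ∈ Icc 0 b := by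
  rcases isEmpty_or_nonempty (∀ i, Ω i) with _ | ⟨⟨y⟩⟩
  · exact ⟨0, fun x => isEmptyElim x⟩
  · exact ⟨W y + Fintype.card ι, fun x => ⟨h.nonneg x, h.le_add_card x y⟩⟩

lemma exists_exp_mem_Icc (l : ℝ) : ∃ a b, 0 < a ∧ ∀ x, exp (l * W x) ∈ Icc a b := by
  obtain ⟨b, hb⟩ := h.exists_forall_mem_Icc
  refine ⟨exp (-(|l| * b)), exp (|l| * b), exp_pos _, fun x => ?_⟩
  have habs : |l * W x| ≤ |l| * b := by
    rw [abs_mul, abs_of_nonneg (hb x).1]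
    exact mul_le_mul_of_nonneg_left (hb x).2 (abs_nonneg l)
  exact ⟨exp_le_exp.2 (abs_le.1 habs).1, exp_le_exp.2 (abs_le.1 habs).2⟩

lemma measurable_exp_mul (l : ℝ) : Measurable fun x => exp (l * W x) :=
  (h.measurable.const_mul l).exp

variable {μ : ∀ i, Measure (Ω i)} [∀ i, IsProbabilityMeasure (μ i)]

lemma integrable_exp (l : ℝ) : Integrable (fun x => exp (l * W x)) (Measure.pi μ) := by
  obtain ⟨b, hb⟩ := h.exists_forall_mem_Icc
  exact integrable_exp_mul_of_mem_Icc h.measurable.aemeasurable (.of_forall hb)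

lemma mem_interior_integrableExpSet (l : ℝ) :
    l ∈ interior (integrableExpSet W (Measure.pi μ)) := by
  have huniv : integrableExpSet W (Measure.pi μ) = univ := eq_univ_of_forall h.integrable_exp
  simp [huniv]

lemma integrable_exp_mul_sub (l : ℝ) (i : ι) :
    Integrable (fun x => exp (l * W x) * (W x - V i x)) (Measure.pi μ) :=
  (h.integrable_exp l).mul_bdd (c := 1)
    (h.measurable.sub (h.measurable_minorant i)).aestronglyMeasurable (.of_forall fun x =>
      abs_le.2 ⟨by linarith [h.minorant_le i x], by linarith [h.le_minorant_add_one i x]⟩)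

lemma integrable_exp_mul (l : ℝ) :
    Integrable (fun x => exp (l * W x) * W x) (Measure.pi μ) := by
  obtain ⟨b, hb⟩ := h.exists_forall_mem_Icc
  exact (h.integrable_exp l).mul_bdd (c := b) h.measurable.aestronglyMeasurable
    (.of_forall fun x => by rw [norm_of_nonneg (hb x).1]; exact (hb x).2)

lemma integral_entropy_update_le (l : ℝ) (i : ι) :
    ∫ x, entropy (μ i) (fun t => exp (l * W (Function.update x i t))) ∂Measure.pi μ ≤
      (exp (-l) + l - 1) * ∫ x, exp (l * W x) * (W x - V i x) ∂Measure.pi μ := by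
  have hint := h.integrable_exp_mul_sub (μ := μ) l i
  rw [← integral_integral_update hint i, ← integral_const_mul]
  obtain ⟨a, b, ha, hab⟩ := h.exists_exp_mem_Icc l
  refine integral_mono (integrable_entropy_update ha (h.measurable_exp_mul l) hab i)
    ((integrable_update hint i).integral_prod_left.const_mul _) fun x => ?_
  simp only [h.minorant_update]
  exact entropy_exp_le (h.measurable.comp (measurable_update x)) fun t =>
    ⟨by simpa only [h.minorant_update] using h.minorant_le i (Function.update x i t),
      by simpa only [h.minorant_update] using h.le_minorant_add_one i (Function.update x i t)⟩

lemma entropy_exp_pi_le (l : ℝ) :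
    entropy (Measure.pi μ) (fun x => exp (l * W x)) ≤
      (exp (-l) + l - 1) * ∫ x, exp (l * W x) * W x ∂Measure.pi μ := by
  obtain ⟨a, b, ha, hab⟩ := h.exists_exp_mem_Icc l
  have hcoef : 0 ≤ exp (-l) + l - 1 := by linarith [add_one_le_exp (-l)]
  calc entropy (Measure.pi μ) (fun x => exp (l * W x))
      ≤ ∑ i, (exp (-l) + l - 1) * ∫ x, exp (l * W x) * (W x - V i x) ∂Measure.pi μ :=
        (entropy_pi_le_sum ha (h.measurable_exp_mul l) hab).trans
          (Finset.sum_le_sum fun i _ => h.integral_entropy_update_le l i)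
    _ = (exp (-l) + l - 1) * ∫ x, exp (l * W x) * ∑ i, (W x - V i x) ∂Measure.pi μ := by
        simp only [← Finset.mul_sum, ← integral_finsetSum _ fun i _ => h.integrable_exp_mul_sub l i]
    _ ≤ (exp (-l) + l - 1) * ∫ x, exp (l * W x) * W x ∂Measure.pi μ := by
        refine mul_le_mul_of_nonneg_left (integral_mono ?_ (h.integrable_exp_mul l) fun x =>
          mul_le_mul_of_nonneg_left (h.sum_sub_le x) (exp_pos _).le) hcoef
        simpa only [Finset.mul_sum] using integrable_finsetSum _ fun i _ =>
          h.integrable_exp_mul_sub l i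

lemma mul_deriv_cgf_le (l : ℝ) :
    (1 - exp (-l)) * deriv (cgf W (Measure.pi μ)) l ≤ cgf W (Measure.pi μ) l := by
  have hpos : 0 < mgf W (Measure.pi μ) l := mgf_pos (h.integrable_exp l)
  have hent := h.entropy_exp_pi_le (μ := μ) l
  have hcomm : ∫ x, exp (l * W x) * log (exp (l * W x)) ∂Measure.pi μ =
      l * ∫ x, exp (l * W x) * W x ∂Measure.pi μ := by
    rw [← integral_const_mul]
    exact integral_congr_ae (.of_forall fun x => by simp only [log_exp]; ring)
  rw [entropy, hcomm] at hent
  rw [deriv_cgf (h.mem_interior_integrableExpSet l), ← mul_div_assoc, div_le_iff₀ hpos, cgf,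
    mgf]
  simp only [mul_comm (W _)]
  linarith

lemma cgf_le {l : ℝ} (hl : l ≤ 0) :
    cgf W (Measure.pi μ) l ≤ (∫ x, W x ∂Measure.pi μ) * (exp l - 1) := by
  rcases hl.eq_or_lt with rfl | hl
  · simp
  have hderiv (l : ℝ) := (analyticAt_cgf
    (h.mem_interior_integrableExpSet (μ := μ) l)).differentiableAt.hasDerivAt
  have hbound := le_mul_exp_sub_one (fun l _ => hderiv l) cgf_zero
    (fun l _ => h.mul_deriv_cgf_le l) hl
  rwa [deriv_cgf_zero (h.mem_interior_integrableExpSet 0), probReal_univ, div_one] at hbound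

theorem measureReal_le_integral_sub_le {t : ℝ} (ht : 0 ≤ t) :
    (Measure.pi μ).real {x | W x ≤ ∫ y, W y ∂Measure.pi μ - t} ≤
      exp (-t ^ 2 / (2 * ∫ y, W y ∂Measure.pi μ)) := by
  set M := ∫ y, W y ∂Measure.pi μ
  have hM : 0 ≤ M := integral_nonneg h.nonneg
  rcases hM.eq_or_lt with hM | hM
  · rw [← hM, mul_zero, div_zero, exp_zero]
    exact measureReal_le_one
  have hl : -t / M ≤ 0 := div_nonpos_of_nonpos_of_nonneg (neg_nonpos.2 ht) hM.le
  refine (measure_le_le_exp_cgf (M - t) hl (h.integrable_exp _)).trans (exp_le_exp.2 ?_)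
  calc -(-t / M) * (M - t) + cgf W (Measure.pi μ) (-t / M)
      ≤ -(-t / M) * (M - t) + M * (-t / M + (-t / M) ^ 2 / 2) := by
        gcongr
        refine (h.cgf_le hl).trans (mul_le_mul_of_nonneg_left ?_ hM.le)
        linarith [exp_le_one_add_add_sq_div_two hl]
    _ = -t ^ 2 / (2 * M) := by
        field_simp
        ring

end IsSelfBounding

end SelfBounding

section RademacherSuprema

variable {κ ι : Type*} [Fintype ι]

/-- The Rademacher supremum `sup_{l ∈ κ} ∑ i, s_i v_{l,i}` of a class of vectors, the signs being
encoded by `sgnB`. -/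
def signSup (v : κ → ι → ℝ) (s : ι → Bool) : ℝ :=
  ⨆ l, ∑ i, sgnB (s i) * v l i

/-- The supremum over the class of the worst case in the sign `s i`: a lower bound for `signSup`
that does not depend on `s i`. -/
def signSupMinorant [DecidableEq ι] (v : κ → ι → ℝ) (i : ι) (s : ι → Bool) : ℝ :=
  ⨆ l, (∑ k ∈ Finset.univ.erase i, sgnB (s k) * v l k - |v l i|)

lemma abs_sgnB_mul (s : Bool) (x : ℝ) : |sgnB s * x| = |x| := by
  cases s <;> simp [sgnB]

variable {v : κ → ι → ℝ} {z N t : ℝ}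

lemma bddAbove_range_sum_sgnB_mul (hN : ∀ l, ∑ i, |v l i| ≤ N) (s : ι → Bool) :
    BddAbove (range fun l => ∑ i, sgnB (s i) * v l i) := by
  refine ⟨N, forall_mem_range.2 fun l => le_trans (Finset.sum_le_sum fun i _ => ?_) (hN l)⟩
  exact (le_abs_self _).trans (abs_sgnB_mul _ _).le

section Minorant

variable [DecidableEq ι]

lemma signSupMinorant_update (i : ι) (s : ι → Bool) (b : Bool) :
    signSupMinorant v i (Function.update s i b) = signSupMinorant v i s := by
  have hsum (l : κ) : ∑ k ∈ Finset.univ.erase i, sgnB (Function.update s i b k) * v l k =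
      ∑ k ∈ Finset.univ.erase i, sgnB (s k) * v l k :=
    Finset.sum_congr rfl fun k hk => by rw [Function.update_of_ne (Finset.ne_of_mem_erase hk)]
  simp only [signSupMinorant, hsum]

lemma sum_erase_sub_abs_le (i : ι) (s : ι → Bool) (l : κ) :
    ∑ k ∈ Finset.univ.erase i, sgnB (s k) * v l k - |v l i| ≤ ∑ k, sgnB (s k) * v l k := by
  rw [← Finset.add_sum_erase _ _ (Finset.mem_univ i)]
  linarith [neg_abs_le (sgnB (s i) * v l i), abs_sgnB_mul (s i) (v l i)]

lemma sum_le_sum_erase_sub_abs_add (i : ι) (s : ι → Bool) (l : κ) :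
    ∑ k, sgnB (s k) * v l k ≤
      ∑ k ∈ Finset.univ.erase i, sgnB (s k) * v l k - |v l i| + 2 * |v l i| := by
  rw [← Finset.add_sum_erase _ _ (Finset.mem_univ i)]
  linarith [le_abs_self (sgnB (s i) * v l i), abs_sgnB_mul (s i) (v l i)]

lemma le_signSupMinorant (hN : ∀ l, ∑ i, |v l i| ≤ N) (i : ι) (s : ι → Bool) (l : κ) :
    ∑ k ∈ Finset.univ.erase i, sgnB (s k) * v l k - |v l i| ≤ signSupMinorant v i s :=
  le_ciSup ((bddAbove_range_sum_sgnB_mul hN s).range_mono _ (sum_erase_sub_abs_le i s)) l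

lemma signSupMinorant_le (hN : ∀ l, ∑ i, |v l i| ≤ N) (i : ι) (s : ι → Bool) :
    signSupMinorant v i s ≤ signSup v s :=
  ciSup_mono (bddAbove_range_sum_sgnB_mul hN s) (sum_erase_sub_abs_le i s)

variable [Nonempty κ]

lemma signSup_le_signSupMinorant_add (hz : ∀ l i, |v l i| ≤ z) (hN : ∀ l, ∑ i, |v l i| ≤ N)
    (i : ι) (s : ι → Bool) : signSup v s ≤ signSupMinorant v i s + 2 * z :=
  ciSup_le fun l => by
    linarith [sum_le_sum_erase_sub_abs_add (v := v) i s l, le_signSupMinorant hN i s l, hz l i]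

lemma sum_signSup_sub_signSupMinorant_le (hN : ∀ l, ∑ i, |v l i| ≤ N) (s : ι → Bool) :
    ∑ i, (signSup v s - signSupMinorant v i s) ≤ signSup v s + N := by
  have hterm (l : κ) : Fintype.card ι * ∑ i, sgnB (s i) * v l i ≤
      ∑ i, signSupMinorant v i s + (signSup v s + N) := by
    have hsum := Finset.sum_le_sum fun i (_ : i ∈ Finset.univ) => le_signSupMinorant hN i s l
    simp only [Finset.sum_erase_eq_sub (Finset.mem_univ _), Finset.sum_sub_distrib,
      Finset.sum_const, Finset.card_univ, nsmul_eq_mul] at hsum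
    have hle : ∑ i, sgnB (s i) * v l i ≤ signSup v s :=
      le_ciSup (bddAbove_range_sum_sgnB_mul hN s) l
    linarith [hN l]
  rw [Finset.sum_sub_distrib, Finset.sum_const, Finset.card_univ, nsmul_eq_mul, sub_le_iff_le_add',
    signSup, Real.mul_iSup_of_nonneg (Nat.cast_nonneg _)]
  exact ciSup_le hterm

lemma isSelfBounding_signSup (hz₀ : 0 < z) (hz : ∀ l i, |v l i| ≤ z)
    (hN : ∀ l, ∑ i, |v l i| ≤ N) :
    IsSelfBounding (fun s => (signSup v s + N) / (2 * z))
      (fun i s => (signSupMinorant v i s + N) / (2 * z)) where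
  measurable := .of_discrete
  measurable_minorant _ := .of_discrete
  minorant_update i s b := by rw [signSupMinorant_update]
  minorant_le i s := by
    gcongr
    exact signSupMinorant_le hN i s
  le_minorant_add_one i s := by
    rw [div_add_one (by positivity), div_le_div_iff_of_pos_right (by positivity)]
    linarith [signSup_le_signSupMinorant_add hz hN i s]
  sum_sub_le s := by
    simp only [← sub_div, add_sub_add_right_eq_sub, ← Finset.sum_div]
    gcongr
    exact sum_signSup_sub_signSupMinorant_le hN s

end Minorant

theorem measureReal_signSup_le_integral_sub_le [Nonempty κ] {μ : ι → Measure Bool}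
    [∀ i, IsProbabilityMeasure (μ i)] (hz₀ : 0 ≤ z) (hz : ∀ l i, |v l i| ≤ z)
    (hN : ∀ l, ∑ i, |v l i| ≤ N) (ht : 0 ≤ t) :
    (Measure.pi μ).real {s | signSup v s ≤ ∫ s', signSup v s' ∂Measure.pi μ - t} ≤
      exp (-t ^ 2 / (4 * z * (∫ s, signSup v s ∂Measure.pi μ + N))) := by
  classical
  rcases hz₀.eq_or_lt with rfl | hz₀
  · simp
  have hmean : ∫ s, (signSup v s + N) / (2 * z) ∂Measure.pi μ =
      (∫ s, signSup v s ∂Measure.pi μ + N) / (2 * z) := by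
    rw [integral_div, integral_add .of_finite .of_finite, integral_const, probReal_univ, one_smul]
  have htail := (isSelfBounding_signSup hz₀ hz hN).measureReal_le_integral_sub_le (μ := μ)
    (t := t / (2 * z)) (by positivity)
  have hexp : -(t / (2 * z)) ^ 2 / (2 * ((∫ s, signSup v s ∂Measure.pi μ + N) / (2 * z))) =
      -t ^ 2 / (4 * z * (∫ s, signSup v s ∂Measure.pi μ + N)) := by
    field_simp
    ring
  simpa only [hmean, hexp, ← sub_div, div_le_div_iff_of_pos_right (mul_pos two_pos hz₀),
    add_sub_right_comm, add_le_add_iff_right] using htail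

end RademacherSuprema

section MonteCarlo

lemma sum_ciSup_eq_ciSup_sum {α κ : Type*} [Fintype α] [Nonempty κ] {a : α → κ → ℝ}
    (ha : ∀ j, BddAbove (range (a j))) :
    ∑ j, ⨆ l, a j l = ⨆ L : α → κ, ∑ j, a j (L j) := by
  have hle (L : α → κ) : ∑ j, a j (L j) ≤ ∑ j, ⨆ l, a j l :=
    Finset.sum_le_sum fun j _ => le_ciSup (ha j) (L j)
  refine le_antisymm ?_ (ciSup_le hle)
  choose u _ hu hmem using fun j => exists_seq_tendsto_sSup (range_nonempty (a j)) (ha j)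
  choose L hL using hmem
  refine le_of_tendsto' (tendsto_finsetSum Finset.univ fun j _ => hu j) fun k => ?_
  simp only [← hL]
  exact le_ciSup (f := fun L : α → κ => ∑ j, a j (L j)) ⟨_, forall_mem_range.2 hle⟩ fun j => L j k

lemma measurePreserving_curry_uniformOfFintype (n m : ℕ) :
    MeasurePreserving Function.curry
      (Measure.pi fun _ : Fin n × Fin m => (PMF.uniformOfFintype Bool).toMeasure)
      (radMeasure n m) := by
  refine ⟨.of_discrete, Measure.ext_of_singleton fun σ => ?_⟩
  have hpre : Function.curry ⁻¹' {σ} = {Function.uncurry σ} := by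
    ext s
    exact ((Equiv.curry (Fin n) (Fin m) Bool).eq_symm_apply).symm
  rw [Measure.map_apply .of_discrete (measurableSet_singleton σ), hpre, Measure.pi_singleton,
    radMeasure]
  simp [ENNReal.inv_pow, ← pow_mul, mul_comm]

variable {X ι : Type*} {f : ι → X → ℝ} {n m : ℕ} {S : Fin m → X}

/-- The class of vectors indexed by sign positions whose Rademacher supremum is `n * m` times the
`n`-Monte-Carlo average: each of the `n` rows chooses its own function. -/
def rowwiseClass (f : ι → X → ℝ) (n : ℕ) (S : Fin m → X) (L : Fin n → ι) (p : Fin n × Fin m) : ℝ :=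
  f (L p.1) (S p.2)

lemma abs_le_zhat (hbdd : BddAbove (range fun p : ι × Fin m => |f p.1 (S p.2)|)) (l : ι)
    (i : Fin m) : |f l (S i)| ≤ zhat f S :=
  le_ciSup hbdd (l, i)

lemma zhat_nonneg : 0 ≤ zhat f S :=
  Real.iSup_nonneg fun _ => abs_nonneg _

lemma sum_abs_le_nuhat (hm : 0 < m)
    (hbdd : BddAbove (range fun p : ι × Fin m => |f p.1 (S p.2)|)) (l : ι) :
    ∑ i, |f l (S i)| ≤ m * nuhat f S := by
  rw [nuhat, mul_inv_cancel_left₀ (by positivity)]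
  refine le_ciSup (f := fun l => ∑ i, |f l (S i)|) ⟨∑ _i : Fin m, zhat f S, ?_⟩ l
  exact forall_mem_range.2 fun l => Finset.sum_le_sum fun i _ => abs_le_zhat hbdd l i

lemma sum_abs_rowwiseClass_le (hm : 0 < m)
    (hbdd : BddAbove (range fun p : ι × Fin m => |f p.1 (S p.2)|)) (L : Fin n → ι) :
    ∑ p, |rowwiseClass f n S L p| ≤ n * m * nuhat f S := by
  calc ∑ p, |rowwiseClass f n S L p| = ∑ j, ∑ i, |f (L j) (S i)| := Fintype.sum_prod_type _
    _ ≤ ∑ _j : Fin n, m * nuhat f S := Finset.sum_le_sum fun j _ => sum_abs_le_nuhat hm hbdd (L j)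
    _ = n * m * nuhat f S := by simp [mul_assoc]

lemma mcera_curry [Nonempty ι] (hbdd : BddAbove (range fun p : ι × Fin m => |f p.1 (S p.2)|))
    (s : Fin n × Fin m → Bool) :
    mcera f n m S (Function.curry s) = signSup (rowwiseClass f n S) s / (n * m) := by
  have hrow (j : Fin n) : BddAbove (range fun l => ∑ i, sgnB (s (j, i)) * f l (S i)) :=
    bddAbove_range_sum_sgnB_mul (v := fun l i => f l (S i)) (N := ∑ _i : Fin m, zhat f S)
      (fun l => Finset.sum_le_sum fun i _ => abs_le_zhat hbdd l i) fun i => s (j, i)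
  simp only [mcera, signSup, rowwiseClass, Function.curry_apply, Fintype.sum_prod_type,
    ← Real.mul_iSup_of_nonneg (inv_nonneg.2 (Nat.cast_nonneg m)), ← Finset.mul_sum,
    sum_ciSup_eq_ciSup_sum hrow]
  rw [div_eq_inv_mul, mul_inv, mul_assoc]

lemma era_eq [Nonempty ι] (hbdd : BddAbove (range fun p : ι × Fin m => |f p.1 (S p.2)|)) :
    era f n m S = (∫ s, signSup (rowwiseClass f n S) s
      ∂Measure.pi fun _ => (PMF.uniformOfFintype Bool).toMeasure) / (n * m) := by
  rw [era, ← (measurePreserving_curry_uniformOfFintype n m).map_eq,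
    integral_map .of_discrete .of_discrete]
  simp only [mcera_curry hbdd, integral_div]

end MonteCarlo

theorem stmt_5_general {X ι : Type*} [Nonempty ι] (f : ι → X → ℝ) (n m : ℕ) (hn : 0 < n)
    (hm : 0 < m) (S : Fin m → X)
    (hbdd : BddAbove (Set.range fun p : ι × Fin m => |f p.1 (S p.2)|)) (ε : ℝ) (hε : 0 ≤ ε) :
    (radMeasure n m
        {σ : Fin n → Fin m → Bool | era f n m S ≥ mcera f n m S σ + ε}).toReal ≤
      Real.exp (-((n : ℝ) * (m : ℝ) * ε ^ 2) /
        (4 * zhat f S * (era f n m S + nuhat f S))) := by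
  have hnm : (0 : ℝ) < n * m := by positivity
  set E := ∫ s, signSup (rowwiseClass f n S) s
    ∂Measure.pi fun _ => (PMF.uniformOfFintype Bool).toMeasure with hE
  have hera : era f n m S = E / (n * m) := era_eq hbdd
  have htail := measureReal_signSup_le_integral_sub_le
    (μ := fun _ : Fin n × Fin m => (PMF.uniformOfFintype Bool).toMeasure)
    (v := rowwiseClass f n S) zhat_nonneg (fun L p => abs_le_zhat hbdd (L p.1) p.2)
    (sum_abs_rowwiseClass_le hm hbdd) (t := n * m * ε) (by positivity)
  rw [← hE] at htail
  have hevent : Function.curry ⁻¹' {σ : Fin n → Fin m → Bool | era f n m S ≥ mcera f n m S σ + ε} =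
      {s | signSup (rowwiseClass f n S) s ≤ E - n * m * ε} := by
    ext s
    simp only [mem_preimage, mem_ofPred_eq, ge_iff_le, hera, mcera_curry hbdd]
    rw [← le_sub_iff_add_le, div_le_iff₀ hnm, sub_mul, div_mul_cancel₀ _ hnm.ne', mul_comm ε]
  have hexp : -((n : ℝ) * m * ε ^ 2) / (4 * zhat f S * (era f n m S + nuhat f S)) =
      -(n * m * ε) ^ 2 / (4 * zhat f S * (E + n * m * nuhat f S)) := by
    rw [hera]
    field_simp
  rw [← (measurePreserving_curry_uniformOfFintype n m).measure_preimage
    (MeasurableSet.of_discrete.nullMeasurableSet), hevent, hexp]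
  exact htail

theorem stmt_5 {X : Type*} [MeasurableSpace X] {ι : Type*} [Countable ι]
    (f : ι → X → ℝ) (a b : ℝ) (ha : a ≤ 0) (hb : 0 < b)
    (hmeas : ∀ l : ι, Measurable (f l))
    (hrange : ∀ (l : ι) (x : X), f l x ∈ Set.Icc a b)
    (hzero : ∃ l₀ : ι, ∀ x : X, f l₀ x = 0)
    (n m : ℕ) (hn : 0 < n) (hm : 0 < m) (S : Fin m → X)
    (ε : ℝ) (hε0 : 0 < ε) (hε : ε ≤ era f n m S) :
    (radMeasure n m
        {σ : Fin n → Fin m → Bool | era f n m S ≥ mcera f n m S σ + ε}).toReal ≤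
      Real.exp (-((n : ℝ) * (m : ℝ) * ε ^ 2) /
        (4 * zhat f S * (era f n m S + nuhat f S))) := by
  have : Nonempty ι := hzero.nonempty
  exact stmt_5_general f n m hn hm S ⟨max |a| |b|, forall_mem_range.2 fun _ =>
    abs_le_max_abs_abs (hrange _ _).1 (hrange _ _).2⟩ ε hε0.le
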